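/- arXiv:1802.05501 — 2 statements merged into one kernel-verified Lean document; each statement's English description precedes it below -/
import Mathlib

section
/- Let k be a positive integer, let G be a finite simple graph admitting a path decomposition in which every bag has size at most k, and let S ⊆ V(G) be a bottleneck, i.e., the number of S-branches is at least 2k+1. Then |S| ≤ k. -/
/-!
Each vertex of `S`, and each `S`-branch, meets a set of bags whose indices form an interval. Let `t`
be the smallest right end among the intervals of the vertices of `S`, attained at `s ∈ S`. Either
every vertex of `S` lies in `X t`, or some `v ∈ S` occurs only in bags after `X t`. In the second
case each `S`-branch is adjacent to both `s` and `v`, so its interval shares an index with that of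
`s`, which ends at `t`, and one with that of `v`, which starts after `t`; hence it contains `t`.
Since distinct branches are disjoint, there are at most `|X t|` of them. So some bag is at least as
large as `S` or at least as large as the set of `S`-branches, and the hypothesis on the number of
branches excludes the latter.
-/

open SimpleGraph

variable {V : Type*}

/-- `N_G(Y)`: the set of vertices outside `Y` having a neighbor in `Y`. -/
def nbhdSet (G : SimpleGraph V) (Y : Set V) : Set V :=
  {v | v ∉ Y ∧ ∃ u ∈ Y, G.Adj u v}

/-- `C` is a connected component of the subgraph of `G` induced by `U`. -/
def IsCompIn (G : SimpleGraph V) (U C : Set V) : Prop :=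
  C.Nonempty ∧ C ⊆ U ∧ (G.induce C).Connected ∧
    ∀ u ∈ C, ∀ v ∈ U, G.Adj u v → v ∈ C

/-- `C` is a connected component of `G - S`. -/
def IsCompOf (G : SimpleGraph V) (S C : Set V) : Prop :=
  IsCompIn G Sᶜ C

/-- `C` is an `S`-branch: a connected component of `G - S` with `N_G(C) = S`. -/
def IsBranch (G : SimpleGraph V) (S C : Set V) : Prop :=
  IsCompOf G S C ∧ nbhdSet G C = S

/-- `S` is a bottleneck (for the width parameter `k`): a nonempty set with
at least `2k+1` `S`-branches. -/
def IsBottleneck (G : SimpleGraph V) (k : ℕ) (S : Set V) : Prop :=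
  S.Nonempty ∧ 2 * k + 1 ≤ {C : Set V | IsBranch G S C}.ncard

/-- `(X 0, …, X (l-1))` is a path decomposition of `G`. -/
def IsPathDecomp (G : SimpleGraph V) (l : ℕ) (X : ℕ → Set V) : Prop :=
  (∀ v, ∃ i < l, v ∈ X i) ∧
  (∀ u v, G.Adj u v → ∃ i < l, u ∈ X i ∧ v ∈ X i) ∧
  (∀ i j m, i ≤ j → j ≤ m → m < l → X i ∩ X m ⊆ X j)

/-- The width of a path decomposition: the maximum bag size minus one. -/
noncomputable def pdWidth (l : ℕ) (X : ℕ → Set V) : ℕ :=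
  ((Finset.range l).sup fun i => (X i).ncard) - 1

/-- The set of indices of bags meeting the vertex set `C`. -/
def supp (l : ℕ) (X : ℕ → Set V) (C : Set V) : Set ℕ :=
  {t | t < l ∧ (C ∩ X t).Nonempty}

/-- `a(C)`: the first index of a bag meeting `C`. -/
noncomputable def firstIdx (l : ℕ) (X : ℕ → Set V) (C : Set V) : ℕ :=
  sInf (supp l X C)

/-- `b(C)`: the last index of a bag meeting `C`. -/
noncomputable def lastIdx (l : ℕ) (X : ℕ → Set V) (C : Set V) : ℕ :=
  sSup (supp l X C)

/-- `C` is an in-branch of `S` with respect to the decomposition: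
an `S`-branch with `S ⊆ X (a C)` and `S ⊆ X (b C)`. -/
def IsInBranch (G : SimpleGraph V) (l : ℕ) (X : ℕ → Set V) (S C : Set V) : Prop :=
  IsBranch G S C ∧ S ⊆ X (firstIdx l X C) ∧ S ⊆ X (lastIdx l X C)

/-- `α(S)`: the minimum of `a(H)` over in-branches `H` of `S`. -/
noncomputable def botStart (G : SimpleGraph V) (l : ℕ) (X : ℕ → Set V) (S : Set V) : ℕ :=
  sInf {i | ∃ C, IsInBranch G l X S C ∧ i = firstIdx l X C}

/-- `β(S)`: the maximum of `b(H)` over in-branches `H` of `S`. -/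
noncomputable def botEnd (G : SimpleGraph V) (l : ℕ) (X : ℕ → Set V) (S : Set V) : ℕ :=
  sSup {i | ∃ C, IsInBranch G l X S C ∧ i = lastIdx l X C}

/-- The interval `I(S,P) = [α(S), β(S)]` of a bottleneck `S`. -/
noncomputable def botInterval (G : SimpleGraph V) (l : ℕ) (X : ℕ → Set V) (S : Set V) : Set ℕ :=
  Set.Icc (botStart G l X S) (botEnd G l X S)

/-- A pre-branch of `S`. -/
def IsPreBranch (G : SimpleGraph V) (l : ℕ) (X : ℕ → Set V) (S C : Set V) : Prop :=
  IsBranch G S C ∧ ¬ IsInBranch G l X S C ∧ firstIdx l X C < botStart G l X S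

/-- A post-branch of `S`. -/
def IsPostBranch (G : SimpleGraph V) (l : ℕ) (X : ℕ → Set V) (S C : Set V) : Prop :=
  IsBranch G S C ∧ ¬ IsInBranch G l X S C ∧
    botStart G l X S ≤ firstIdx l X C ∧ botEnd G l X S < lastIdx l X C

/-- `C` waits in the interval `[i, j]` of the decomposition. -/
def WaitsIn (X : ℕ → Set V) (C : Set V) (i j : ℕ) : Prop :=
  ∀ t, i ≤ t → t ≤ j → C ∩ X t = C ∩ X i

/-- The decomposition is `S`-structured: every component of `G - S` that is not an
`S`-branch, and every pre- or post-branch of `S`, waits in `I(S,P)`. -/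
def IsStructured (G : SimpleGraph V) (l : ℕ) (X : ℕ → Set V) (S : Set V) : Prop :=
  ∀ C : Set V,
    ((IsCompOf G S C ∧ ¬ IsBranch G S C) ∨ IsPreBranch G l X S C ∨ IsPostBranch G l X S C) →
    WaitsIn X C (botStart G l X S) (botEnd G l X S)

/-- The decomposition is `I`-connected: every connected component of the subgraph
induced by any prefix of bags contains a vertex of `I`. -/
def IsIConn (G : SimpleGraph V) (l : ℕ) (X : ℕ → Set V) (I : Set V) : Prop :=
  ∀ i < l, ∀ C : Set V, IsCompIn G {v | ∃ j ≤ i, v ∈ X j} C → (C ∩ I).Nonempty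

section Components

variable {G : SimpleGraph V} {U C D : Set V}

theorem exists_adj_mem_notMem_of_connected_induce (hC : (G.induce C).Connected) {A : Set V}
    (hA : (C ∩ A).Nonempty) (hA' : (C \ A).Nonempty) :
    ∃ a ∈ C ∩ A, ∃ b ∈ C \ A, G.Adj a b := by
  obtain ⟨x, hxC, hxA⟩ := hA
  obtain ⟨y, hyC, hyA⟩ := hA'
  obtain ⟨p⟩ := hC.preconnected ⟨x, hxC⟩ ⟨y, hyC⟩
  obtain ⟨⟨⟨a, b⟩, hab⟩, -, haA, hbA⟩ := p.exists_boundary_dart (Subtype.val ⁻¹' A) hxA hyA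
  exact ⟨a, ⟨a.2, haA⟩, b, ⟨b.2, hbA⟩, hab⟩

theorem IsCompIn.subset_of_connected (hC : IsCompIn G U C) (hDU : D ⊆ U)
    (hD : (G.induce D).Connected) (hDC : (D ∩ C).Nonempty) : D ⊆ C := by
  obtain ⟨-, -, -, hC_closed⟩ := hC
  by_contra hsub
  obtain ⟨a, ⟨-, haC⟩, b, ⟨hbD, hbC⟩, hab⟩ :=
    exists_adj_mem_notMem_of_connected_induce hD hDC (Set.sdiff_nonempty.2 hsub)
  exact hbC (hC_closed a haC b (hDU hbD) hab)

theorem pairwiseDisjoint_setOf_isCompIn (G : SimpleGraph V) (U : Set V) :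
    {C | IsCompIn G U C}.PairwiseDisjoint id := by
  intro C hC D hD hne
  by_contra hdisj
  have hCD : (C ∩ D).Nonempty := Set.not_disjoint_iff_nonempty_inter.1 hdisj
  have hDC : (D ∩ C).Nonempty := Set.inter_comm C D ▸ hCD
  exact hne ((hD.subset_of_connected hC.2.1 hC.2.2.1 hCD).antisymm
    (hC.subset_of_connected hD.2.1 hD.2.2.1 hDC))

theorem pairwiseDisjoint_setOf_isBranch (G : SimpleGraph V) (S : Set V) :
    {C | IsBranch G S C}.PairwiseDisjoint id :=
  (pairwiseDisjoint_setOf_isCompIn G Sᶜ).subset fun _ hC => hC.1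

end Components

theorem encard_le_of_pairwiseDisjoint_of_inter_nonempty {α : Type*} {F : Set (Set α)} {T : Set α}
    (hF : F.PairwiseDisjoint id) (hT : ∀ C ∈ F, (C ∩ T).Nonempty) : F.encard ≤ T.encard := by
  choose f hfC hfT using hT
  have hf_inj : Function.Injective fun C : F => (⟨f C C.2, hfT C C.2⟩ : T) := by
    intro C D hCD
    have hfCD : f C C.2 = f D D.2 := congrArg Subtype.val hCD
    exact Subtype.ext (hF.elim_set C.2 D.2 (f C C.2) (hfC C C.2) (hfCD.symm ▸ hfC D D.2))
  exact Function.Embedding.encard_le ⟨_, hf_inj⟩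

section PathDecomposition

variable {G : SimpleGraph V} {l : ℕ} {X : ℕ → Set V} {S C : Set V}

theorem bddAbove_supp (l : ℕ) (X : ℕ → Set V) (C : Set V) : BddAbove (supp l X C) :=
  ⟨l, fun _ ht => ht.1.le⟩

theorem lastIdx_mem_supp (h : (supp l X C).Nonempty) : lastIdx l X C ∈ supp l X C :=
  Nat.sSup_mem h (bddAbove_supp l X C)

theorem le_lastIdx {t : ℕ} (ht : t ∈ supp l X C) : t ≤ lastIdx l X C :=
  le_csSup (bddAbove_supp l X C) ht

theorem mem_supp_singleton {t : ℕ} {v : V} : t ∈ supp l X {v} ↔ t < l ∧ v ∈ X t := by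
  simp [supp]

namespace IsPathDecomp

theorem lastIdx_singleton_mem_supp (hX : IsPathDecomp G l X) (v : V) :
    lastIdx l X {v} ∈ supp l X {v} := by
  obtain ⟨i, hi⟩ := hX.1 v
  exact lastIdx_mem_supp ⟨i, mem_supp_singleton.2 hi⟩

theorem ordConnected_supp (hX : IsPathDecomp G l X) (hC : (G.induce C).Connected) :
    (supp l X C).OrdConnected := by
  obtain ⟨-, hedge, hinterval⟩ := hX
  refine ⟨?_⟩
  rintro i ⟨-, x, hxC, hxi⟩ j ⟨hjl, y, hyC, hyj⟩ t ⟨hit, htj⟩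
  refine ⟨htj.trans_lt hjl, ?_⟩
  by_contra hempty
  have hCt : ∀ z ∈ C, z ∉ X t := fun z hzC hzt => hempty ⟨z, hzC, hzt⟩
  let before : Set V := {z | ∃ m ≤ t, z ∈ X m}
  have hy : y ∉ before := fun ⟨m, hmt, hym⟩ => hCt y hyC (hinterval m t j hmt htj hjl ⟨hym, hyj⟩)
  obtain ⟨a, ⟨haC, m, hmt, ham⟩, b, ⟨-, hb⟩, hab⟩ :=
    exists_adj_mem_notMem_of_connected_induce hC ⟨x, hxC, show x ∈ before from ⟨i, hit, hxi⟩⟩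
      ⟨y, hyC, hy⟩
  obtain ⟨n, hnl, han, hbn⟩ := hedge a b hab
  have htn : t < n := lt_of_not_ge fun hnt => hb ⟨n, hnt, hbn⟩
  exact hCt a haC (hinterval m t n hmt htn.le hnl ⟨ham, han⟩)

theorem supp_inter_supp_singleton_nonempty (hX : IsPathDecomp G l X) {v : V}
    (hv : v ∈ nbhdSet G C) : (supp l X C ∩ supp l X {v}).Nonempty := by
  obtain ⟨-, u, huC, huv⟩ := hv
  obtain ⟨i, hil, hui, hvi⟩ := hX.2.1 u v huv
  exact ⟨i, ⟨hil, u, huC, hui⟩, mem_supp_singleton.2 ⟨hil, hvi⟩⟩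

theorem exists_subset_bag_or_forall_mem_supp (hX : IsPathDecomp G l X) (hS : S.Nonempty) :
    ∃ t < l, S ⊆ X t ∨
      ∀ C, (G.induce C).Connected → S ⊆ nbhdSet G C → t ∈ supp l X C := by
  obtain ⟨s, hs⟩ := exists_minimalFor_of_wellFoundedLT (· ∈ S) (fun v => lastIdx l X {v}) hS
  set t := lastIdx l X {s}
  refine ⟨t, (hX.lastIdx_singleton_mem_supp s).1,
    or_iff_not_imp_left.2 fun hSt C hC hSC => ?_⟩
  obtain ⟨v, hvS, hvt⟩ := Set.not_subset.1 hSt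
  obtain ⟨i, hiC, his⟩ := hX.supp_inter_supp_singleton_nonempty (hSC hs.prop)
  obtain ⟨j, hjC, hjv⟩ := hX.supp_inter_supp_singleton_nonempty (hSC hvS)
  have hit : i ≤ t := le_lastIdx his
  have htj : t ≤ j := by
    by_contra! hjt
    have htv : t ≤ lastIdx l X {v} := hs.le hvS
    obtain ⟨hvl, hv_last⟩ := mem_supp_singleton.1 (hX.lastIdx_singleton_mem_supp v)
    exact hvt (hX.2.2 j t _ hjt.le htv hvl ⟨(mem_supp_singleton.1 hjv).2, hv_last⟩)
  exact (hX.ordConnected_supp hC).out hiC hjC ⟨hit, htj⟩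

theorem exists_encard_le_encard_bag_or_encard_branches_le (hX : IsPathDecomp G l X)
    (hS : S.Nonempty) :
    ∃ t < l, S.encard ≤ (X t).encard ∨ {C | IsBranch G S C}.encard ≤ (X t).encard := by
  obtain ⟨t, htl, ht⟩ := hX.exists_subset_bag_or_forall_mem_supp hS
  refine ⟨t, htl, ht.imp Set.encard_le_encard fun hmeet => ?_⟩
  refine encard_le_of_pairwiseDisjoint_of_inter_nonempty (pairwiseDisjoint_setOf_isBranch G S) ?_
  rintro C ⟨⟨-, -, hC, -⟩, hCS⟩
  exact (hmeet C hC hCS.ge).2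

end IsPathDecomp

theorem stmt4_general {k : ℕ∞} (hX : IsPathDecomp G l X) (hcard : ∀ i < l, (X i).encard ≤ k)
    (hS : k < {C | IsBranch G S C}.encard) : S.encard ≤ k := by
  obtain rfl | hne := S.eq_empty_or_nonempty
  · simp
  obtain ⟨t, htl, hSt | hbranches⟩ := hX.exists_encard_le_encard_bag_or_encard_branches_le hne
  · exact hSt.trans (hcard t htl)
  · exact absurd (hbranches.trans (hcard t htl)) hS.not_ge

end PathDecomposition

/-- if `G` admits a path decomposition with bags of size at most `k`
and `S` is a bottleneck, then `|S| ≤ k`. -/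
theorem stmt4 [Fintype V] (k : ℕ) (hk : 1 ≤ k) (G : SimpleGraph V)
    (hdec : ∃ (l : ℕ) (X : ℕ → Set V),
      IsPathDecomp G l X ∧ ∀ i < l, (X i).ncard ≤ k)
    (S : Set V) (hS : IsBottleneck G k S) :
    S.ncard ≤ k := by
  obtain ⟨l, X, hX, hcard⟩ := hdec
  have hbag : ∀ i < l, (X i).encard ≤ k := fun i hi =>
    Set.encard_le_coe_iff_finite_ncard_le.2 ⟨Set.toFinite _, hcard i hi⟩
  have hbranches : k < {C | IsBranch G S C}.encard := by
    rw [← (Set.toFinite _).cast_ncard_eq]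
    exact_mod_cast (show k < 2 * k + 1 by omega).trans_le hS.2
  exact (Set.encard_le_coe_iff_finite_ncard_le.1 (stmt4_general hX hbag hbranches)).2
end

section
/- Let k be a positive integer, let G be a finite simple graph admitting a path decomposition in which every bag has size at most k, and let S and S' be bottlenecks of G with S' ⊄ S. Then there exists exactly one connected component H of G−S such that S' ⊆ S ∪ V(H). -/
/-!
Each `S`-branch has neighborhood all of `S`, and distinct `S`-branches are disjoint. So if `S` has
more branches than a set `T` has elements, then some `S`-branch avoids `T`.

The bags met by a connected set form an interval. Let `s ∈ S` be a vertex whose last bag `X b` comes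
earliest. If an `S`-branch avoids `X b`, its interval lies strictly before `b`, because the branch
shares a bag with `s`. Every `t ∈ S` then shares with the branch a bag before `b`, and has a bag at
or after `b` by the choice of `s`, so `t ∈ X b`. Hence a set with more branches than any bag has
elements lies in a single bag.

Consequently some `S'`-branch avoids `S`. It lies in a component `H` of `G - S`, so its
neighborhood `S'` lies in `S ∪ H`; the component `H` is determined by any vertex of `S' \ S`.
-/

open SimpleGraph

variable {V : Type*}

section Components

variable {G : SimpleGraph V} {S U C D : Set V}

theorem subset_of_preconnected_induce (hC : (G.induce C).Preconnected) (hCD : (C ∩ D).Nonempty)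
    (hD : ∀ u ∈ C ∩ D, ∀ v ∈ C, G.Adj u v → v ∈ D) : C ⊆ D := by
  obtain ⟨u, huC, huD⟩ := hCD
  intro v hv
  by_contra hvD
  obtain ⟨w⟩ := hC ⟨u, huC⟩ ⟨v, hv⟩
  obtain ⟨d, -, hfst, hsnd⟩ := w.exists_boundary_dart (Subtype.val ⁻¹' D) huD hvD
  exact hsnd (hD d.fst ⟨d.fst.2, hfst⟩ d.snd d.snd.2 d.adj)

theorem IsCompIn.subset_of_inter_nonempty (hD : IsCompIn G U D)
    (hC : (G.induce C).Preconnected) (hCU : C ⊆ U) (hCD : (C ∩ D).Nonempty) : C ⊆ D :=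
  subset_of_preconnected_induce hC hCD fun u hu v hv huv => hD.2.2.2 u hu.2 v (hCU hv) huv

theorem IsCompIn.eq_of_inter_nonempty (hC : IsCompIn G U C) (hD : IsCompIn G U D)
    (hCD : (C ∩ D).Nonempty) : C = D :=
  (hD.subset_of_inter_nonempty hC.2.2.1.preconnected hC.2.1 hCD).antisymm
    (hC.subset_of_inter_nonempty hD.2.2.1.preconnected hD.2.1 (Set.inter_comm C D ▸ hCD))

theorem exists_isCompIn_superset (hC : (G.induce C).Connected) (hCU : C ⊆ U) :
    ∃ H, IsCompIn G U H ∧ C ⊆ H := by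
  let F : Set (Set V) := {T | C ⊆ T ∧ T ⊆ U ∧ (G.induce T).Connected}
  have hCF : C ∈ F := ⟨subset_rfl, hCU, hC⟩
  have hCH : C ⊆ ⋃₀ F := Set.subset_sUnion_of_mem hCF
  have hCne : C.Nonempty := Set.nonempty_coe_sort.1 hC.nonempty
  refine ⟨⋃₀ F, ⟨hCne.mono hCH, Set.sUnion_subset fun T hT => hT.2.1, ?_, ?_⟩, hCH⟩
  · exact induce_sUnion_connected_of_pairwise_not_disjoint ⟨C, hCF⟩
      (fun hT hT' => hCne.mono (Set.subset_inter hT.1 hT'.1)) (fun hT => hT.2.2)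
  · rintro u ⟨T, ⟨hCT, hTU, hT⟩, huT⟩ v hv huv
    refine ⟨T ∪ {v}, ⟨hCT.trans Set.subset_union_left, ?_, ?_⟩, Or.inr rfl⟩
    · exact Set.union_subset hTU (Set.singleton_subset_iff.2 hv)
    · exact connected_induce_union hT.preconnected Preconnected.of_subsingleton huT rfl huv

theorem IsCompOf.nbhdSet_subset (hD : IsCompOf G S D) (hCD : C ⊆ D) : nbhdSet G C ⊆ S ∪ D := by
  rintro v ⟨-, u, hu, huv⟩
  by_cases hv : v ∈ S
  · exact Or.inl hv
  · exact Or.inr (hD.2.2.2 u (hCD hu) v hv huv)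

end Components

section PathDecomposition

variable {G : SimpleGraph V} {l : ℕ} {X : ℕ → Set V} {S C : Set V}

theorem IsPathDecomp.isGreatest_lastIdx (hX : IsPathDecomp G l X) (hC : C.Nonempty) :
    IsGreatest (supp l X C) (lastIdx l X C) := by
  have hbdd : BddAbove (supp l X C) := ⟨l, fun _ hi => hi.1.le⟩
  obtain ⟨v, hv⟩ := hC
  obtain ⟨i, hi, hvi⟩ := hX.1 v
  exact ⟨Nat.sSup_mem ⟨i, hi, v, hv, hvi⟩ hbdd, fun _ hj => le_csSup hbdd hj⟩

theorem IsPathDecomp.exists_mem_supp_of_mem_nbhdSet (hX : IsPathDecomp G l X) {v : V}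
    (hv : v ∈ nbhdSet G C) : ∃ i ∈ supp l X C, v ∈ X i := by
  obtain ⟨-, u, hu, huv⟩ := hv
  obtain ⟨i, hi, hui, hvi⟩ := hX.2.1 u v huv
  exact ⟨i, ⟨hi, u, hu, hui⟩, hvi⟩

theorem IsPathDecomp.ordConnected_supp_s6 (hX : IsPathDecomp G l X)
    (hC : (G.induce C).Preconnected) : (supp l X C).OrdConnected := by
  refine ⟨fun i ⟨_, u, huC, hui⟩ j ⟨hj, v, hvC, hvj⟩ b ⟨hib, hbj⟩ => ?_⟩
  by_contra hb
  have notMem_bag : ∀ w ∈ C, w ∉ X b := fun w hw hwb => hb ⟨hbj.trans_lt hj, w, hw, hwb⟩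
  have before_of_bag : ∀ w ∈ C, ∀ m ≤ b, w ∈ X m → ∀ n < l, w ∈ X n → n < b := by
    intro w hw m hmb hwm n hn hwn
    by_contra! hbn
    exact notMem_bag w hw (hX.2.2 m b n hmb hbn hn ⟨hwm, hwn⟩)
  have before : C ⊆ {w | ∀ n < l, w ∈ X n → n < b} := by
    refine subset_of_preconnected_induce hC ⟨u, huC, before_of_bag u huC i hib hui⟩ ?_
    intro w hw x hx hwx
    obtain ⟨m, hm, hwm, hxm⟩ := hX.2.1 w x hwx
    exact before_of_bag x hx m (hw.2 m hm hwm).le hxm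
  exact (before hvC j hj hvj).not_ge hbj

theorem IsPathDecomp.exists_subset_bag (hX : IsPathDecomp G l X) (hS : S.Nonempty)
    (hbranch : ∀ i < l, ∃ C, IsBranch G S C ∧ Disjoint C (X i)) : ∃ i < l, S ⊆ X i := by
  let last (v : V) : ℕ := lastIdx l X {v}
  have last_mem (v : V) : last v < l ∧ v ∈ X (last v) := by
    simpa [supp] using (hX.isGreatest_lastIdx (Set.singleton_nonempty v)).1
  have le_last {v : V} {i : ℕ} (hi : i < l) (hvi : v ∈ X i) : i ≤ last v :=
    (hX.isGreatest_lastIdx (Set.singleton_nonempty v)).2 ⟨hi, v, rfl, hvi⟩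
  obtain ⟨s, hs, hmin⟩ : ∃ s ∈ S, ∀ t ∈ S, last s ≤ last t :=
    ⟨_, Function.argminOn_mem last S hS, fun _ => Function.argminOn_le last S⟩
  obtain ⟨C, hC, hCb⟩ := hbranch (last s) (last_mem s).1
  refine ⟨last s, (last_mem s).1, fun t ht => ?_⟩
  obtain ⟨i, hiC, hsi⟩ := hX.exists_mem_supp_of_mem_nbhdSet (hC.2 ▸ hs)
  obtain ⟨j, hjC, htj⟩ := hX.exists_mem_supp_of_mem_nbhdSet (hC.2 ▸ ht)
  have hj : j ≤ last s := by
    by_contra! hsj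
    have hsupp := (hX.ordConnected_supp_s6 hC.1.2.2.1.preconnected).out hiC hjC
    exact (hsupp ⟨le_last hiC.1 hsi, hsj.le⟩).2.not_disjoint hCb
  exact hX.2.2 j (last s) (last t) hj (hmin t ht) (last_mem t).1 ⟨htj, (last_mem t).2⟩

end PathDecomposition

section Bottlenecks

open scoped Cardinal

variable {G : SimpleGraph V} {S S' T : Set V}

theorem exists_isBranch_disjoint (hT : #T < #{C // IsBranch G S C}) :
    ∃ C, IsBranch G S C ∧ Disjoint C T := by
  by_contra! hmeet
  have hmeet' (C : {C // IsBranch G S C}) : ∃ v : T, (v : V) ∈ C.1 := by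
    obtain ⟨v, hvC, hvT⟩ := Set.not_disjoint_iff.1 (hmeet C C.2)
    exact ⟨⟨v, hvT⟩, hvC⟩
  choose f hf using hmeet'
  refine hT.not_ge (Cardinal.mk_le_of_injective (f := f) fun C D hCD => Subtype.ext ?_)
  exact C.2.1.eq_of_inter_nonempty D.2.1 ⟨f C, hf C, hCD ▸ hf D⟩

theorem IsPathDecomp.mk_le_of_lt_mk_isBranch {l : ℕ} {X : ℕ → Set V} {κ : Cardinal}
    (hX : IsPathDecomp G l X) (hκ : ∀ i < l, #(X i) ≤ κ) (hS : κ < #{C // IsBranch G S C}) :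
    #S ≤ κ := by
  obtain rfl | hne := S.eq_empty_or_nonempty
  · simp
  · obtain ⟨i, hi, hSi⟩ := hX.exists_subset_bag hne fun i hi =>
      exists_isBranch_disjoint ((hκ i hi).trans_lt hS)
    exact (Cardinal.mk_le_mk_of_subset hSi).trans (hκ i hi)

theorem IsBranch.exists_isCompOf_subset_union {C : Set V} (hC : IsBranch G S' C)
    (hCS : Disjoint C S) : ∃ H, IsCompOf G S H ∧ S' ⊆ S ∪ H := by
  obtain ⟨H, hH, hCH⟩ := exists_isCompIn_superset hC.1.2.2.1 hCS.subset_compl_right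
  exact ⟨H, hH, hC.2 ▸ IsCompOf.nbhdSet_subset hH hCH⟩

theorem IsBottleneck.lt_mk_isBranch {k : ℕ} (hS : IsBottleneck G k S) :
    (k : Cardinal) < #{C // IsBranch G S C} := by
  have hk : k < {C | IsBranch G S C}.ncard := by have := hS.2; omega
  calc (k : Cardinal) < {C | IsBranch G S C}.ncard := by exact_mod_cast hk
    _ = #{C // IsBranch G S C} := Set.cast_ncard (Set.finite_of_ncard_pos (Nat.zero_lt_of_lt hk))

theorem stmt6_general {l : ℕ} {X : ℕ → Set V} {κ : Cardinal} (hX : IsPathDecomp G l X)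
    (hκ : ∀ i < l, #(X i) ≤ κ) (hS : κ < #{C // IsBranch G S C})
    (hS' : κ < #{C // IsBranch G S' C}) (hns : ¬ S' ⊆ S) :
    ∃! H : Set V, IsCompOf G S H ∧ S' ⊆ S ∪ H := by
  obtain ⟨C, hC, hCS⟩ := exists_isBranch_disjoint ((hX.mk_le_of_lt_mk_isBranch hκ hS).trans_lt hS')
  obtain ⟨H, hH, hS'H⟩ := hC.exists_isCompOf_subset_union hCS
  obtain ⟨u, huS', huS⟩ := Set.not_subset.1 hns
  refine ⟨H, ⟨hH, hS'H⟩, fun H' ⟨hH', hS'H'⟩ => ?_⟩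
  exact hH'.eq_of_inter_nonempty hH
    ⟨u, (hS'H' huS').resolve_left huS, (hS'H huS').resolve_left huS⟩

end Bottlenecks

/-- for bottlenecks `S, S'` with `S' ⊄ S` (in a graph admitting a path
decomposition with bags of size at most `k`), there is exactly one connected
component `H` of `G - S` with `S' ⊆ S ∪ H`. -/
theorem stmt6 [Fintype V] (k : ℕ) (hk : 1 ≤ k) (G : SimpleGraph V)
    (hdec : ∃ (l : ℕ) (X : ℕ → Set V),
      IsPathDecomp G l X ∧ ∀ i < l, (X i).ncard ≤ k)
    (S S' : Set V) (hS : IsBottleneck G k S) (hS' : IsBottleneck G k S')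
    (hns : ¬ S' ⊆ S) :
    ∃! H : Set V, IsCompOf G S H ∧ S' ⊆ S ∪ H := by
  obtain ⟨l, X, hX, hXk⟩ := hdec
  exact stmt6_general hX (fun i hi => Set.cast_ncard (X i).toFinite ▸ Nat.cast_le.2 (hXk i hi))
    hS.lt_mk_isBranch hS'.lt_mk_isBranch hns
end
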